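/- Let G be a group, μ a left-invariant finitely additive probability measure on G, and A ⊆ G with μ(A) > 0. Define φ : G → [0,1] by φ(x) = μ(A ∩ xA), let S be the closure of the G-orbit of φ in [0,1]^G (with the action (g·ψ)(x) = ψ(g⁻¹x)), and let E = E(S) be the Ellis semigroup of S. Suppose K is the unique minimal subflow of E, K is a left ideal of (E, ∘) and a group under composition with identity u, and u commutes with every element of E. Then u(φ)(1) ≥ μ(A)², where u(φ) ∈ S ⊆ [0,1]^G is the image of φ under the function u ∈ E ⊆ S^S and 1 is the identity of G. -/

import Mathlib

/-!
The function `φ(x) = μ(A ∩ xA)` is a matrix coefficient of the regular representation on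
`L²(G, μ)`, and the bound comes from an idempotent weak limit of translations acting like an
orthogonal projection there.

Since `μ` is only finitely additive, the Hilbert space is built from the positive semidefinite
kernel `(s, t) ↦ μ(X s ∩ X t)`, where the sets `X s` are `G` itself and the translates `xA`
(`LIFAPM.kernel_nonneg`, `LIFAPM.exists_hilbert`). Write `𝟙` for the vector of `G` and `e x` for
that of `xA`.

Choose an ultrafilter `U` on `G` along which the translations converge pointwise to `u`, and put
`ψ = u(φ)`. For `h : G` let `v h` be the weak limit of `e (h * g)` along `U`; then
`⟪v h, e x⟫ = ψ(h⁻¹x)`, and `‖v h‖` does not depend on `h`. Idempotence `u ∘ u = u` says that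
`v h → v 1` weakly along `U`; as the norms agree, the convergence is strong. Hence
`ψ(1) = ⟪v h, e h⟫` has along `U` the same limit as `⟪v 1, e h⟫`, namely `‖v 1‖²`. Finally
`⟪v 1, 𝟙⟫ = μ(A)` and `‖𝟙‖ = 1`, so `‖v 1‖ ≥ μ(A)` by Cauchy–Schwarz (`sq_le_of_idempotent`).
-/

set_option linter.unusedSectionVars false

/-- A left-invariant finitely additive probability measure on a group `G`. -/
structure LIFAPM (G : Type*) [Group G] where
  m : Set G → ℝ
  nonneg : ∀ X : Set G, 0 ≤ m X
  le_one : ∀ X : Set G, m X ≤ 1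
  empty : m (∅ : Set G) = 0
  univ : m (Set.univ : Set G) = 1
  additive : ∀ X Y : Set G, Disjoint X Y → m (X ∪ Y) = m X + m Y
  left_invariant : ∀ (g : G) (X : Set G), m ((fun x => g * x) '' X) = m X

variable {G : Type*} [Group G]

/-- The translation action of `G` on `[0,1]^G`: `(g • ψ)(x) = ψ(g⁻¹x)`. -/
def transAct (g : G) (ψ : G → Set.Icc (0 : ℝ) 1) : G → Set.Icc (0 : ℝ) 1 :=
  fun x => ψ (g⁻¹ * x)

/-- The function `φ(x) = μ(A ∩ xA)`, as an element of `[0,1]^G`. -/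
noncomputable def phiFn (μ : LIFAPM G) (A : Set G) : G → Set.Icc (0 : ℝ) 1 :=
  fun x => ⟨μ.m (A ∩ (fun a => x * a) '' A), μ.nonneg _, μ.le_one _⟩

/-- The orbit closure of `φ` in `[0,1]^G`: the underlying space of the `G`-flow `S`. -/
noncomputable def orbClosure (μ : LIFAPM G) (A : Set G) : Set (G → Set.Icc (0 : ℝ) 1) :=
  closure (Set.range fun g : G => transAct g (phiFn μ A))

theorem transAct_comp (g h : G) (ψ : G → Set.Icc (0 : ℝ) 1) :
    transAct g (transAct h ψ) = transAct (g * h) ψ := by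
  funext x
  simp [transAct, mul_inv_rev, mul_assoc]

theorem transAct_mem (μ : LIFAPM G) (A : Set G) (g : G) {ψ : G → Set.Icc (0 : ℝ) 1}
    (hψ : ψ ∈ orbClosure μ A) : transAct g ψ ∈ orbClosure μ A := by
  have hc : Continuous (transAct g) := continuous_pi fun x => continuous_apply (g⁻¹ * x)
  have h1 : transAct g '' (Set.range fun h : G => transAct h (phiFn μ A)) ⊆
      Set.range fun h : G => transAct h (phiFn μ A) := by
    rintro _ ⟨_, ⟨h, rfl⟩, rfl⟩
    exact ⟨g * h, (transAct_comp g h (phiFn μ A)).symm⟩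
  exact closure_mono h1 (image_closure_subset_closure_image hc ⟨ψ, hψ, rfl⟩)

/-- The `G`-action on the orbit closure of `φ`. -/
noncomputable def transActS (μ : LIFAPM G) (A : Set G) (g : G) (ψ : orbClosure μ A) :
    orbClosure μ A :=
  ⟨transAct g ↑ψ, transAct_mem μ A g ψ.2⟩

theorem transActS_continuous (μ : LIFAPM G) (A : Set G) (g : G) :
    Continuous (transActS μ A g) := by
  apply Continuous.subtype_mk
  exact (continuous_pi fun x => continuous_apply (g⁻¹ * x)).comp continuous_subtype_val

/-- The `G`-action on the orbit closure of `φ`, as a continuous self-map. -/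
noncomputable def transActSCM (μ : LIFAPM G) (A : Set G) (g : G) :
    C(orbClosure μ A, orbClosure μ A) :=
  ⟨transActS μ A g, transActS_continuous μ A g⟩

instance (μ : LIFAPM G) (A : Set G) : CompactSpace (orbClosure μ A) :=
  isCompact_iff_compactSpace.mp (IsClosed.isCompact isClosed_closure)

/-- The Ellis semigroup of the orbit-closure flow: the closure of the set of action maps
`ψ ↦ g • ψ` in the product space of self-maps of the orbit closure. -/
noncomputable def EllisOC (μ : LIFAPM G) (A : Set G) :
    Set (orbClosure μ A → orbClosure μ A) :=
  closure (Set.range fun g : G => transActS μ A g)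

/-- A subflow of the Ellis semigroup of the orbit-closure flow. -/
def IsSubflowOC (μ : LIFAPM G) (A : Set G)
    (K : Set (orbClosure μ A → orbClosure μ A)) : Prop :=
  K.Nonempty ∧ IsClosed K ∧ K ⊆ EllisOC μ A ∧
    ∀ g : G, ∀ p ∈ K, (transActS μ A g) ∘ p ∈ K

/-- A minimal subflow of the Ellis semigroup of the orbit-closure flow. -/
def IsMinSubflowOC (μ : LIFAPM G) (A : Set G)
    (K : Set (orbClosure μ A → orbClosure μ A)) : Prop :=
  IsSubflowOC μ A K ∧
    ∀ K' : Set (orbClosure μ A → orbClosure μ A), IsSubflowOC μ A K' → K' ⊆ K → K' = K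

/-- `φ` itself is a point of the orbit closure. -/
theorem phiFn_mem_orbClosure (μ : LIFAPM G) (A : Set G) : phiFn μ A ∈ orbClosure μ A :=
  subset_closure ⟨1, by funext x; simp [transAct]⟩

/-- `φ` as a point of the orbit-closure flow. -/
noncomputable def phiS (μ : LIFAPM G) (A : Set G) : orbClosure μ A :=
  ⟨phiFn μ A, phiFn_mem_orbClosure μ A⟩

open Filter Topology

/-- A finitely additive measure is the sum of its restrictions to finitely many fibres. -/
theorem LIFAPM.sum_fibres (μ : LIFAPM G) {β : Type*} [DecidableEq β] (τ : G → β) (X : Set G)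
    (P : Finset β) :
    μ.m (X ∩ {x | τ x ∈ P}) = ∑ b ∈ P, μ.m (X ∩ {x | τ x = b}) := by
  induction P using Finset.induction_on with
  | empty => simp [μ.empty]
  | insert b P hb ih =>
    rw [Finset.sum_insert hb, ← ih, ← μ.additive]
    · congr 1
      ext x
      simp only [Finset.mem_insert, Set.mem_inter_iff, Set.mem_ofPred_eq, Set.mem_union]
      tauto
    · rw [Set.disjoint_left]
      rintro x ⟨_, h1⟩ ⟨_, h2⟩
      simp only [Set.mem_ofPred_eq] at h1 h2
      exact hb (h1 ▸ h2)

/-- Positivity of the kernel `μ(X i ∩ X j)`: the double sum is the integral of the square of the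
simple function `∑ i, c i • 1_{X i}`, computed on the atoms of the algebra generated by the
`X i`. -/
theorem LIFAPM.kernel_nonneg (μ : LIFAPM G) {ι : Type*} (X : ι → Set G) (s : Finset ι)
    (c : ι → ℝ) : 0 ≤ ∑ i ∈ s, ∑ j ∈ s, c i * c j * μ.m (X i ∩ X j) := by
  classical
  -- The atom of `x` is recorded by the set of `i ∈ s` with `x ∈ X i`.
  let τ : G → Finset ι := fun x => s.filter fun i => x ∈ X i
  have hτ : ∀ x, τ x ∈ s.powerset := fun x => Finset.mem_powerset.2 (Finset.filter_subset _ _)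
  have key : ∀ i ∈ s, ∀ j ∈ s, μ.m (X i ∩ X j) =
      ∑ T ∈ s.powerset, (if i ∈ T then 1 else 0) * (if j ∈ T then 1 else 0) *
        μ.m {x | τ x = T} := by
    intro i hi j hj
    have h := μ.sum_fibres τ (X i ∩ X j) s.powerset
    have h0 : {x | τ x ∈ s.powerset} = Set.univ := Set.eq_univ_of_forall hτ
    rw [h0, Set.inter_univ] at h
    rw [h]
    refine Finset.sum_congr rfl fun T _ => ?_
    by_cases hT : i ∈ T ∧ j ∈ T
    · rw [if_pos hT.1, if_pos hT.2, one_mul, one_mul]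
      congr 1
      ext x
      simp only [Set.mem_inter_iff, Set.mem_ofPred_eq, and_iff_right_iff_imp]
      rintro rfl
      exact ⟨(Finset.mem_filter.1 hT.1).2, (Finset.mem_filter.1 hT.2).2⟩
    · have h1 : X i ∩ X j ∩ {x | τ x = T} = ∅ := by
        ext x
        simp only [Set.mem_inter_iff, Set.mem_ofPred_eq, Set.mem_empty_iff_false, iff_false]
        rintro ⟨⟨hxi, hxj⟩, rfl⟩
        exact hT ⟨Finset.mem_filter.2 ⟨hi, hxi⟩, Finset.mem_filter.2 ⟨hj, hxj⟩⟩
      rw [h1, μ.empty]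
      by_cases h2 : i ∈ T
      · have h3 : j ∉ T := fun h3 => hT ⟨h2, h3⟩
        simp [h3]
      · simp [h2]
  have hsum : ∑ i ∈ s, ∑ j ∈ s, c i * c j * μ.m (X i ∩ X j) =
      ∑ T ∈ s.powerset, μ.m {x | τ x = T} * (∑ i ∈ s, c i * (if i ∈ T then 1 else 0)) ^ 2 := by
    calc ∑ i ∈ s, ∑ j ∈ s, c i * c j * μ.m (X i ∩ X j)
        = ∑ i ∈ s, ∑ j ∈ s, ∑ T ∈ s.powerset, μ.m {x | τ x = T} *
            ((c i * (if i ∈ T then 1 else 0)) * (c j * (if j ∈ T then 1 else 0))) := by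
          refine Finset.sum_congr rfl fun i hi => Finset.sum_congr rfl fun j hj => ?_
          rw [key i hi j hj, Finset.mul_sum]
          refine Finset.sum_congr rfl fun T _ => ?_
          ring
      _ = ∑ i ∈ s, ∑ T ∈ s.powerset, ∑ j ∈ s, μ.m {x | τ x = T} *
            ((c i * (if i ∈ T then 1 else 0)) * (c j * (if j ∈ T then 1 else 0))) :=
          Finset.sum_congr rfl fun i _ => Finset.sum_comm
      _ = ∑ T ∈ s.powerset, ∑ i ∈ s, ∑ j ∈ s, μ.m {x | τ x = T} *
            ((c i * (if i ∈ T then 1 else 0)) * (c j * (if j ∈ T then 1 else 0))) :=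
          Finset.sum_comm
      _ = _ := by
          refine Finset.sum_congr rfl fun T _ => ?_
          rw [sq, Finset.sum_mul_sum, Finset.mul_sum]
          refine Finset.sum_congr rfl fun i _ => ?_
          rw [Finset.mul_sum]
  rw [hsum]
  exact Finset.sum_nonneg fun T _ => mul_nonneg (μ.nonneg _) (sq_nonneg _)

/-- Any family of subsets of `G` is realised by vectors of a Hilbert space whose inner products
are the measures of the pairwise intersections, and which span a dense subspace: the reproducing
kernel Hilbert space of the kernel `μ(X i ∩ X j)`. -/
theorem LIFAPM.exists_hilbert.{w} {G : Type w} [Group G] (μ : LIFAPM G) {ι : Type w}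
    (X : ι → Set G) :
    ∃ (H : Type w) (_ : NormedAddCommGroup H) (_ : InnerProductSpace ℝ H) (_ : CompleteSpace H)
      (e : ι → H), (∀ i j, inner ℝ (e i) (e j) = μ.m (X i ∩ X j)) ∧
        (Submodule.span ℝ (Set.range e)).topologicalClosure = ⊤ := by
  let K : Matrix ι ι (ℝ →L[ℝ] ℝ) :=
    Matrix.of fun i j => μ.m (X i ∩ X j) • ContinuousLinearMap.id ℝ ℝ
  have hK : K.PosSemidef := by
    have htfae := (RKHS.posSemidef_tfae (K := K)).out 0 2
    refine htfae.2 ⟨?_, fun c => ?_⟩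
    · ext i j
      simp [K, Matrix.conjTranspose_apply, Set.inter_comm, star_smul,
        ContinuousLinearMap.star_eq_adjoint, ContinuousLinearMap.adjoint_id]
    · have h := μ.kernel_nonneg X c.support c
      simp only [Finsupp.sum]
      refine h.trans_eq ?_
      simp only [K, RCLike.re_to_real]
      refine Finset.sum_congr rfl fun i _ => Finset.sum_congr rfl fun j _ => ?_
      simp [Set.inter_comm]
      ring
  have : Fact K.PosSemidef := ⟨hK⟩
  refine ⟨RKHS.OfKernel K, inferInstance, inferInstance, inferInstance,
    fun i => RKHS.kerFun (RKHS.OfKernel K) i 1, fun i j => ?_, ?_⟩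
  · rw [RKHS.kerFun_inner, RKHS.kerFun_apply, RKHS.OfKernel.kernel_ofKernel]
    simp [K]
  · rw [← top_le_iff, ← RKHS.kerFun_dense (RKHS.OfKernel K)]
    refine Submodule.topologicalClosure_mono (Submodule.span_le.2 ?_)
    rintro _ ⟨i, t, rfl⟩
    have : RKHS.kerFun (RKHS.OfKernel K) i t = t • RKHS.kerFun (RKHS.OfKernel K) i 1 := by
      rw [← map_smul]; simp
    rw [this]
    exact Submodule.smul_mem _ _ (Submodule.subset_span ⟨i, rfl⟩)

/-- Bounded families in a Hilbert space converge weakly along ultrafilters (Banach–Alaoglu). -/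
theorem exists_weak_limit {H : Type*} [NormedAddCommGroup H] [InnerProductSpace ℝ H]
    [CompleteSpace H] {J : Type*} (U : Ultrafilter J) (y : J → H) (C : ℝ)
    (hy : ∀ j, ‖y j‖ ≤ C) :
    ∃ v : H, ∀ z, Tendsto (fun j => inner ℝ (y j) z) U (𝓝 (inner ℝ v z)) := by
  let F : J → WeakDual ℝ H := fun j => StrongDual.toWeakDual (InnerProductSpace.toDual ℝ H (y j))
  have hc := WeakDual.isCompact_closedBall (𝕜 := ℝ) (E := H) 0 C
  obtain ⟨L, -, hL⟩ := hc.ultrafilter_le_nhds (U.map F) (by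
    rw [le_principal_iff]
    refine Ultrafilter.mem_map.2 (Filter.univ_mem' fun j => ?_)
    show WeakDual.toStrongDual (F j) ∈ Metric.closedBall _ _
    simpa [F] using hy j)
  refine ⟨(InnerProductSpace.toDual ℝ H).symm (WeakDual.toStrongDual L), fun z => ?_⟩
  have h1 : Tendsto F U (𝓝 L) := hL
  have h2 := ((WeakDual.eval_continuous z).tendsto L).comp h1
  rw [InnerProductSpace.toDual_symm_apply]
  exact h2

/-- Weak convergence of a bounded family may be tested on a set with dense span. -/
theorem tendsto_inner_of_dense {H : Type*} [NormedAddCommGroup H] [InnerProductSpace ℝ H]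
    {J ι : Type*} {l : Filter J} (y : J → H) (v : H) (C : ℝ) (hy : ∀ j, ‖y j‖ ≤ C)
    (e : ι → H) (he : (Submodule.span ℝ (Set.range e)).topologicalClosure = ⊤)
    (h : ∀ i, Tendsto (fun j => inner ℝ (y j) (e i)) l (𝓝 (inner ℝ v (e i)))) (z : H) :
    Tendsto (fun j => inner ℝ (y j) z) l (𝓝 (inner ℝ v z)) := by
  have hspan : ∀ w ∈ Submodule.span ℝ (Set.range e),
      Tendsto (fun j => inner ℝ (y j) w) l (𝓝 (inner ℝ v w)) := by
    intro w hw
    induction hw using Submodule.span_induction with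
    | mem x hx => obtain ⟨i, rfl⟩ := hx; exact h i
    | zero => simpa only [inner_zero_right] using tendsto_const_nhds
    | add a b _ _ ha hb => simpa only [inner_add_right] using ha.add hb
    | smul t a _ ha => simpa only [real_inner_smul_right] using ha.const_mul t
  have hz : z ∈ closure (Submodule.span ℝ (Set.range e) : Set H) := by
    have : z ∈ (Submodule.span ℝ (Set.range e)).topologicalClosure := he ▸ Submodule.mem_top
    exact this
  rw [Metric.tendsto_nhds]
  intro ε hε
  let D := |C| + ‖v‖ + 1
  have hD : 0 < D := by positivity
  obtain ⟨w, hw, hzw⟩ := Metric.mem_closure_iff.1 hz (ε / (2 * D)) (by positivity)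
  filter_upwards [Metric.tendsto_nhds.1 (hspan w hw) (ε / 2) (by positivity)] with j hj
  rw [Real.dist_eq] at hj ⊢
  have e1 : inner ℝ (y j) z - inner ℝ v z =
      (inner ℝ (y j) w - inner ℝ v w) + inner ℝ (y j - v) (z - w) := by
    simp only [inner_sub_left, inner_sub_right]; ring
  have e2 : |inner ℝ (y j - v) (z - w)| ≤ D * (ε / (2 * D)) := by
    refine (abs_real_inner_le_norm _ _).trans ?_
    refine mul_le_mul ?_ (by rw [← dist_eq_norm]; exact hzw.le) (norm_nonneg _) hD.le
    have := norm_sub_le (y j) v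
    have := hy j
    have := le_abs_self C
    simp only [D]; linarith
  have e3 : D * (ε / (2 * D)) = ε / 2 := by field_simp
  rw [e1]
  have := abs_add_le (inner ℝ (y j) w - inner ℝ v w) (inner ℝ (y j - v) (z - w))
  linarith

/-- The bound for an arbitrary function `ψ` which is a limit of translates of `φ` along an
ultrafilter and is fixed by the limit of translations along the same ultrafilter. -/
theorem sq_le_of_idempotent (μ : LIFAPM G) (A : Set G) (U : Ultrafilter G) (ψ : G → ℝ)
    (h1 : ∀ x, Tendsto (fun g => μ.m (A ∩ (fun a => (g⁻¹ * x) * a) '' A)) U (𝓝 (ψ x)))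
    (h2 : ∀ x, Tendsto (fun g => ψ (g⁻¹ * x)) U (𝓝 (ψ x))) :
    μ.m A ^ 2 ≤ ψ 1 := by
  -- `none` indexes all of `G`, and `some x` the translate `xA`.
  let X : Option G → Set G := fun o => o.elim Set.univ fun x => (fun a => x * a) '' A
  obtain ⟨H, _, _, _, e, he, hdense⟩ := μ.exists_hilbert X
  have hnorm : ∀ i, ‖e i‖ ≤ 1 := by
    intro i
    have h := he i i
    rw [real_inner_self_eq_norm_sq] at h
    have := μ.le_one (X i ∩ X i)
    nlinarith [norm_nonneg (e i)]
  choose v hv using fun h : G => exists_weak_limit U (fun g => e (some (h * g))) 1 fun _ => hnorm _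
  have hvx : ∀ h x, inner ℝ (v h) (e (some x)) = ψ (h⁻¹ * x) := by
    intro h x
    refine tendsto_nhds_unique (hv h (e (some x))) ((h1 (h⁻¹ * x)).congr fun g => ?_)
    rw [he, ← μ.left_invariant (h * g), Set.image_inter (mul_right_injective _), Set.image_image]
    congr 2
    ext y
    simp [X, mul_assoc]
  have hv0 : ∀ h, inner ℝ (v h) (e none) = μ.m A := by
    intro h
    refine tendsto_nhds_unique (hv h (e none)) (tendsto_const_nhds.congr fun g => ?_)
    rw [he]
    simp only [X, Option.elim, Set.inter_univ]
    exact (μ.left_invariant _ A).symm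
  -- The squared norm of `v h` is the limit of `ψ` along `U`, whatever `h` is.
  have hvv : ∀ h, Tendsto (fun g => ψ g) U (𝓝 (‖v h‖ ^ 2)) := by
    intro h
    rw [← real_inner_self_eq_norm_sq]
    refine (hv h (v h)).congr fun g => ?_
    rw [real_inner_comm, hvx, inv_mul_cancel_left]
  have hvn : ∀ h, ‖v h‖ ^ 2 = ‖v 1‖ ^ 2 := fun h => tendsto_nhds_unique (hvv h) (hvv 1)
  have hvn' : ∀ h, ‖v h‖ ≤ ‖v 1‖ := fun h =>
    (sq_le_sq₀ (norm_nonneg _) (norm_nonneg _)).1 (hvn h).le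
  have hweak := tendsto_inner_of_dense (l := (U : Filter G)) v (v 1) _ hvn' e hdense (by
    rintro (_ | x)
    · simp only [hv0]; exact tendsto_const_nhds
    · simp only [hvx, inv_one, one_mul]; exact h2 x) (v 1)
  have hstrong : Tendsto (fun h => ‖v h - v 1‖) U (𝓝 0) := by
    have h3 : Tendsto (fun h => ‖v h - v 1‖ ^ 2) U (𝓝 0) := by
      have h4 := (hweak.const_mul 2).const_sub (2 * ‖v 1‖ ^ 2)
      rw [real_inner_self_eq_norm_sq, sub_self] at h4
      refine h4.congr fun h => ?_
      rw [norm_sub_sq_real, hvn h]; ring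
    simpa [Real.sqrt_sq (norm_nonneg _)] using h3.sqrt
  have hlim : Tendsto (fun h => inner ℝ (v h - v 1) (e (some h))) U (𝓝 0) := by
    refine squeeze_zero_norm (fun h => ?_) hstrong
    refine (norm_inner_le_norm _ _).trans ?_
    exact mul_le_of_le_one_right (norm_nonneg _) (hnorm _)
  have hfin : ψ 1 = ‖v 1‖ ^ 2 := by
    have h5 := hlim.add (hvv 1)
    rw [zero_add] at h5
    refine tendsto_nhds_unique (tendsto_const_nhds.congr fun h => ?_) h5
    rw [inner_sub_left, hvx, hvx]
    simp
  rw [hfin, ← hv0 1]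
  have h6 := real_inner_le_norm (v 1) (e none)
  have h7 : inner ℝ (v 1) (e none) ≤ ‖v 1‖ :=
    h6.trans (mul_le_of_le_one_right (norm_nonneg _) (hnorm _))
  exact pow_le_pow_left₀ (hv0 1 ▸ μ.nonneg A) h7 2

/-- Let `μ(A) > 0`, let `S` be the orbit closure of `φ(x) = μ(A ∩ xA)` in `[0,1]^G`, and let
`E` be the Ellis semigroup of `S`.  If `K` is the unique minimal subflow of `E`, `K` is a
left ideal of `(E, ∘)` and a group under composition with identity `u`, and `u` commutes with
every element of `E`, then `u(φ)(1) ≥ μ(A)²`. -/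
theorem phi_at_identity_ge (μ : LIFAPM G) (A : Set G) (hA : 0 < μ.m A)
    (K : Set (orbClosure μ A → orbClosure μ A))
    (hKmin : IsMinSubflowOC μ A K)
    (hKuniq : ∀ K' : Set (orbClosure μ A → orbClosure μ A),
      IsMinSubflowOC μ A K' → K' = K)
    (hideal : ∀ p ∈ EllisOC μ A, ∀ q ∈ K, p ∘ q ∈ K)
    (hmul : ∀ p ∈ K, ∀ q ∈ K, p ∘ q ∈ K)
    (u : orbClosure μ A → orbClosure μ A) (hu : u ∈ K)
    (hid : ∀ p ∈ K, u ∘ p = p ∧ p ∘ u = p)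
    (hinv : ∀ p ∈ K, ∃ q ∈ K, p ∘ q = u ∧ q ∘ p = u)
    (hcomm : ∀ q ∈ EllisOC μ A, u ∘ q = q ∘ u) :
    μ.m A ^ 2 ≤ ((u (phiS μ A) : G → Set.Icc (0 : ℝ) 1) 1 : ℝ) := by
  have huE : u ∈ closure (Set.range fun g : G => transActS μ A g) := hKmin.1.2.2.1 hu
  have hne : (comap (fun g : G => transActS μ A g) (𝓝 u)).NeBot :=
    comap_neBot_iff.2 fun t ht => by
      obtain ⟨_, hy, g, rfl⟩ := mem_closure_iff_nhds.1 huE t ht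
      exact ⟨g, hy⟩
  let U : Ultrafilter G := Ultrafilter.of (comap (fun g : G => transActS μ A g) (𝓝 u))
  have hU : Tendsto (fun g : G => transActS μ A g) U (𝓝 u) :=
    tendsto_comap.mono_left (Ultrafilter.of_le _)
  have hpt : ∀ (ξ : orbClosure μ A) (x : G),
      Tendsto (fun g : G => (((ξ : G → Set.Icc (0 : ℝ) 1) (g⁻¹ * x) : Set.Icc (0 : ℝ) 1) : ℝ)) U
        (𝓝 (((u ξ : G → Set.Icc (0 : ℝ) 1) x : Set.Icc (0 : ℝ) 1) : ℝ)) := by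
    intro ξ x
    have hc : Continuous fun p : orbClosure μ A → orbClosure μ A =>
        (((p ξ : G → Set.Icc (0 : ℝ) 1) x : Set.Icc (0 : ℝ) 1) : ℝ) :=
      continuous_subtype_val.comp
        ((continuous_apply x).comp (continuous_subtype_val.comp (continuous_apply ξ)))
    exact (hc.tendsto u).comp hU
  refine sq_le_of_idempotent μ A U (fun x => ((u (phiS μ A) : G → Set.Icc (0 : ℝ) 1) x : ℝ))
    (fun x => hpt (phiS μ A) x) fun x => ?_
  have hidem : u (u (phiS μ A)) = u (phiS μ A) := congrFun (hid u hu).1 (phiS μ A)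
  have h := hpt (u (phiS μ A)) x
  rwa [hidem] at h
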